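/- With J as above and x, y the 6×6 matrices defined over F_{q^2} by: x the block matrix with blocks I_2, [[0,1],[1,0]], [[−1,a],[0,1]] on the diagonal, and y the block matrix with upper-left 3×3 block the cyclic permutation (e_1↦e_2↦e_3↦e_1) and lower-right 3×3 block [[b/c, e/c^2, d/c^2],[1, −b/c, −b^q/c],[0,1,0]], it holds that x^T·J·x^σ = J and y^T·J·y^σ = J, where σ is entrywise q-th power. -/

import Mathlib

/-!
Let `σ` be the `q`-th power map, which is an involution on a field of `q ^ 2` elements, and write
`ā = σ a`. Put `f = a³ + ā³ - 6aā + 8`. Two pairs of formulas for `d` and `e` explain the two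
isometries:

* `d = 2f` and `e = -āf`. The form on the last two coordinates is thus a multiple of
  `[[2, -ā], [-a, 2]]`, for which `[[-1, a], [0, 1]]` is the unitary reflection in the first basis
  vector.
* `d = c² - b b̄` and `e = c b̄ - b²`. The form on the last three coordinates is thus what
  Gram-Schmidt orthogonalization against the first vector makes of the circulant form with entries
  `c, b, b̄`, and the corresponding block of `y` is a cyclic permutation of the original basis.
-/

open Matrix

section PreservesForm

variable {R m n : Type*} [CommSemiring R] [Fintype m] [Fintype n] {σ : R →+* R}

/-- `PreservesForm σ J g` says that `g` is an isometry of the `σ`-sesquilinear form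
`(u, v) ↦ uᵀ J σ(v)` with Gram matrix `J`. The second argument is the twisted one, and `J` is not
required to be hermitian or nondegenerate. -/
def PreservesForm (σ : R →+* R) (J g : Matrix n n R) : Prop :=
  gᵀ * J * g.map σ = J

namespace PreservesForm

theorem smul {J g : Matrix n n R} (h : PreservesForm σ J g) (r : R) :
    PreservesForm σ (r • J) g := by
  rw [PreservesForm, mul_smul_comm, smul_mul_assoc, h]

theorem fromBlocks {J g : Matrix m m R} {J' g' : Matrix n n R}
    (h : PreservesForm σ J g) (h' : PreservesForm σ J' g') :
    PreservesForm σ (fromBlocks J 0 0 J') (fromBlocks g 0 0 g') := by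
  unfold PreservesForm at h h' ⊢
  simp [fromBlocks_transpose, fromBlocks_map, fromBlocks_multiply, h, h']

theorem reindex {J g : Matrix m m R} (h : PreservesForm σ J g) (e : m ≃ n) :
    PreservesForm σ (reindex e e J) (reindex e e g) := by
  rw [PreservesForm, reindex_apply, reindex_apply, transpose_submatrix, ← submatrix_map,
    submatrix_mul_equiv, submatrix_mul_equiv, h]

theorem of_intertwining [DecidableEq n] {J g h T : Matrix n n R} (hT : IsUnit T)
    (hgT : g * T = T * h) (hh : PreservesForm σ (Tᵀ * J * T.map σ) h) :
    PreservesForm σ J g := by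
  have hT' : IsUnit Tᵀ := (isUnit_transpose T).2 hT
  have hTσ : IsUnit (T.map σ) := hT.map σ.mapMatrix
  refine hT'.mul_left_cancel (hTσ.mul_right_cancel ?_)
  calc Tᵀ * (gᵀ * J * g.map σ) * T.map σ
      = (g * T)ᵀ * J * (g * T).map σ := by
        simp only [transpose_mul, Matrix.map_mul, Matrix.mul_assoc]
    _ = hᵀ * (Tᵀ * J * T.map σ) * h.map σ := by
        simp only [hgT, transpose_mul, Matrix.map_mul, Matrix.mul_assoc]
    _ = Tᵀ * J * T.map σ := hh

end PreservesForm

theorem preservesForm_permMatrix_iff [DecidableEq n] {J : Matrix n n R} {π : Equiv.Perm n} :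
    PreservesForm σ J (π.permMatrix R) ↔ J.submatrix π.symm π.symm = J := by
  have hmap : (π.permMatrix R).map σ = π.permMatrix R := PEquiv.map_toMatrix σ _
  rw [PreservesForm, hmap, transpose_permMatrix, PEquiv.toMatrix_toPEquiv_mul,
    PEquiv.mul_toMatrix_toPEquiv, submatrix_submatrix]
  rfl

theorem preservesForm_diagonal_const_permMatrix [DecidableEq n] (r : R) (π : Equiv.Perm n) :
    PreservesForm σ (diagonal fun _ => r) (π.permMatrix R) :=
  preservesForm_permMatrix_iff.2 (submatrix_diagonal_equiv _ _)

theorem preservesForm_circulant_permMatrix_subRight [DecidableEq n] [AddGroup n] (v : n → R)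
    (k : n) : PreservesForm σ (circulant v) (Equiv.Perm.permMatrix R (Equiv.subRight k)) := by
  refine preservesForm_permMatrix_iff.2 (Matrix.ext fun i j => ?_)
  simp [circulant_apply]

end PreservesForm

theorem preservesForm_reflection {R : Type*} [CommRing R] (σ : R →+* R) (a : R) :
    PreservesForm σ !![2, -σ a; -a, 2] !![-1, a; 0, 1] := by
  ext i j
  fin_cases i <;> fin_cases j <;> simp [mul_apply, Fin.sum_univ_two] <;> ring

theorem preservesForm_swap_reflection {R : Type*} [CommRing R] (σ : R →+* R) (a c r : R) :
    PreservesForm σ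
      !![c, 0, 0, 0, 0, 0;
         0, c, 0, 0, 0, 0;
         0, 0, c, 0, 0, 0;
         0, 0, 0, c, 0, 0;
         0, 0, 0, 0, r * 2, r * -σ a;
         0, 0, 0, 0, r * -a, r * 2]
      !![1, 0, 0, 0, 0, 0;
         0, 1, 0, 0, 0, 0;
         0, 0, 0, 1, 0, 0;
         0, 0, 1, 0, 0, 0;
         0, 0, 0, 0, -1, a;
         0, 0, 0, 0, 0, 1] := by
  convert ((preservesForm_diagonal_const_permMatrix c (Equiv.swap (2 : Fin 4) 3)).fromBlocks
    ((preservesForm_reflection σ a).smul r)).reindex finSumFinEquiv using 1 <;>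
  · ext i j
    fin_cases i <;> fin_cases j <;> rfl

section Circulant

variable {K : Type*} [Field K] (σ : K →+* K) (b c : K)

/-- The Gram matrix obtained from the circulant form with first column `(c, b, σ b)` by
orthogonalizing the last two basis vectors against the first one; its lower right block is the
Schur complement of `c`. -/
def schurGram : Matrix (Fin 3) (Fin 3) K :=
  !![c, 0, 0;
     0, (c ^ 2 - b * σ b) / c, (c * σ b - b ^ 2) / c;
     0, σ (c * σ b - b ^ 2) / c, (c ^ 2 - b * σ b) / c]

/-- The lower right block of the generator `y`, with `d` and `e` written in terms of `b` and `c`. -/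
def cyclicIsometry : Matrix (Fin 3) (Fin 3) K :=
  !![b / c, (c * σ b - b ^ 2) / c ^ 2, (c ^ 2 - b * σ b) / c ^ 2;
     1, -(b / c), -(σ b / c);
     0, 1, 0]

/-- The basis with circulant Gram matrix: its columns are the first standard basis vector and the
images of that vector under `cyclicIsometry σ b c` and its square. -/
def orbitBasis : Matrix (Fin 3) (Fin 3) K :=
  !![1, b / c, σ b / c;
     0, 1, 0;
     0, 0, 1]

theorem isUnit_orbitBasis : IsUnit (orbitBasis σ b c) := by
  rw [isUnit_iff_isUnit_det]
  simp [orbitBasis, det_fin_three]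

variable {σ b c}

theorem cyclicIsometry_mul_orbitBasis (hc : c ≠ 0) :
    cyclicIsometry σ b c * orbitBasis σ b c =
      orbitBasis σ b c * Equiv.Perm.permMatrix K (Equiv.subRight 1) := by
  rw [PEquiv.mul_toMatrix_toPEquiv]
  ext i j
  fin_cases i <;> fin_cases j <;>
    simp [cyclicIsometry, orbitBasis, mul_apply, Fin.sum_univ_three] <;> field_simp <;> ring

theorem orbitBasis_gram (hc : c ≠ 0) (hσc : σ c = c) (hσb : σ (σ b) = b) :
    (orbitBasis σ b c)ᵀ * schurGram σ b c * (orbitBasis σ b c).map σ =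
      circulant ![c, b, σ b] := by
  ext i j
  fin_cases i <;> fin_cases j <;>
    simp [schurGram, orbitBasis, mul_apply, Fin.sum_univ_three, circulant_apply, hσc, hσb] <;>
    field_simp <;> ring

theorem preservesForm_cyclicIsometry (hc : c ≠ 0) (hσc : σ c = c) (hσb : σ (σ b) = b) :
    PreservesForm σ (schurGram σ b c) (cyclicIsometry σ b c) := by
  refine .of_intertwining (isUnit_orbitBasis σ b c) (cyclicIsometry_mul_orbitBasis hc) ?_
  rw [orbitBasis_gram hc hσc hσb]
  exact preservesForm_circulant_permMatrix_subRight _ 1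

theorem preservesForm_rotation_cyclicIsometry (hc : c ≠ 0) (hσc : σ c = c)
    (hσb : σ (σ b) = b) :
    PreservesForm σ
      !![c, 0, 0, 0, 0, 0;
         0, c, 0, 0, 0, 0;
         0, 0, c, 0, 0, 0;
         0, 0, 0, c, 0, 0;
         0, 0, 0, 0, (c ^ 2 - b * σ b) / c, (c * σ b - b ^ 2) / c;
         0, 0, 0, 0, σ (c * σ b - b ^ 2) / c, (c ^ 2 - b * σ b) / c]
      !![0, 0, 1, 0, 0, 0;
         1, 0, 0, 0, 0, 0;
         0, 1, 0, 0, 0, 0;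
         0, 0, 0, b / c, (c * σ b - b ^ 2) / c ^ 2, (c ^ 2 - b * σ b) / c ^ 2;
         0, 0, 0, 1, -(b / c), -(σ b / c);
         0, 0, 0, 0, 1, 0] := by
  convert ((preservesForm_diagonal_const_permMatrix c (Equiv.subRight (1 : Fin 3))).fromBlocks
    (preservesForm_cyclicIsometry hc hσc hσb)).reindex finSumFinEquiv using 1 <;>
  · ext i j
    fin_cases i <;> fin_cases j <;> rfl

end Circulant

theorem exists_ringHom_eq_pow_of_dvd_card {F : Type*} [Field F] [Fintype F] {q : ℕ}
    (hq : q ∣ Fintype.card F) : ∃ σ : F →+* F, ∀ t, σ t = t ^ q := by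
  obtain ⟨p, _, n, hp, hcard⟩ := FiniteField.card' F
  have : ExpChar F p := .prime hp
  obtain ⟨k, -, rfl⟩ := (Nat.dvd_prime_pow hp).1 (hcard ▸ hq)
  exact ⟨iterateFrobenius F p k, iterateFrobenius_def p k⟩

theorem stmt_14_general {K : Type*} [Field K] (σ : K →+* K) (a b c d e : K)
    (ha : σ (σ a) = a)
    (hb : b = 2 * a - σ a ^ 2)
    (hc : c = σ a * a - 4) (hc0 : c ≠ 0)
    (hd : d = 2 * a ^ 3 + 2 * σ a ^ 3 - 12 * (σ a * a) + 16)
    (he : e = -σ a ^ 4 + 6 * (σ a ^ 2 * a) - σ a * a ^ 3 - 8 * σ a)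
    (x y J : Matrix (Fin 6) (Fin 6) K)
    (hx : x = !![1, 0, 0, 0, 0, 0;
                 0, 1, 0, 0, 0, 0;
                 0, 0, 0, 1, 0, 0;
                 0, 0, 1, 0, 0, 0;
                 0, 0, 0, 0, -1, a;
                 0, 0, 0, 0, 0, 1])
    (hy : y = !![0, 0, 1, 0, 0, 0;
                 1, 0, 0, 0, 0, 0;
                 0, 1, 0, 0, 0, 0;
                 0, 0, 0, b / c, e / c ^ 2, d / c ^ 2;
                 0, 0, 0, 1, -(b / c), -(σ b / c);
                 0, 0, 0, 0, 1, 0])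
    (hJ : J = !![c, 0, 0, 0, 0, 0;
                 0, c, 0, 0, 0, 0;
                 0, 0, c, 0, 0, 0;
                 0, 0, 0, c, 0, 0;
                 0, 0, 0, 0, d / c, e / c;
                 0, 0, 0, 0, σ e / c, d / c]) :
    PreservesForm σ J x ∧ PreservesForm σ J y := by
  obtain ⟨f, hf⟩ : ∃ f, f = a ^ 3 + σ a ^ 3 - 6 * (σ a * a) + 8 := ⟨_, rfl⟩
  have hσf : σ f = f := by simp only [hf, map_add, map_sub, map_mul, map_pow, map_ofNat, ha]; ring
  have hσc : σ c = c := by simp only [hc, map_sub, map_mul, map_ofNat, ha, mul_comm]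
  have hσb : σ b = 2 * σ a - a ^ 2 := by simp only [hb, map_sub, map_mul, map_pow, map_ofNat, ha]
  have hσσb : σ (σ b) = b := by simp only [hb, map_sub, map_mul, map_pow, map_ofNat, ha]
  have hdf : d = f * 2 := by rw [hd, hf]; ring
  have hef : e = f * -σ a := by rw [he, hf]; ring
  have hσef : σ e = f * -a := by rw [hef, map_mul, map_neg, hσf, ha]
  have hdbc : d = c ^ 2 - b * σ b := by rw [hd, hσb, hb, hc]; ring
  have hebc : e = c * σ b - b ^ 2 := by rw [he, hσb, hb, hc]; ring
  constructor
  · rw [hJ, hx, hσef, hdf, hef]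
    simpa only [mul_div_right_comm] using preservesForm_swap_reflection σ a c (f / c)
  · rw [hJ, hy, hdbc, hebc]
    exact preservesForm_rotation_cyclicIsometry hc0 hσc hσσb

/-- The generators `x`, `y` of equation (2.1) preserve the hermitian form with Gram matrix
`J`: one has `xᵀ J xᵠ = J` and `yᵀ J yᵠ = J`, where `σ` is the entrywise `q`-th power. -/
theorem stmt_14 (q : ℕ) (hq : IsPrimePow q) (F : Type*) [Field F] [Fintype F]
    (hF : Fintype.card F = q ^ 2) (a b c d e : F) (ha : a ^ q ≠ a)
    (hb : b = 2 * a - a ^ (2 * q))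
    (hc : c = a ^ (q + 1) - 4) (hc0 : c ≠ 0)
    (hd : d = 2 * a ^ 3 + 2 * a ^ (3 * q) - 12 * a ^ (q + 1) + 16)
    (he : e = -a ^ (4 * q) + 6 * a ^ (2 * q + 1) - a ^ (q + 3) - 8 * a ^ q)
    (x y J : Matrix (Fin 6) (Fin 6) F)
    (hx : x = !![1, 0, 0, 0, 0, 0;
                 0, 1, 0, 0, 0, 0;
                 0, 0, 0, 1, 0, 0;
                 0, 0, 1, 0, 0, 0;
                 0, 0, 0, 0, -1, a;
                 0, 0, 0, 0, 0, 1])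
    (hy : y = !![0, 0, 1, 0, 0, 0;
                 1, 0, 0, 0, 0, 0;
                 0, 1, 0, 0, 0, 0;
                 0, 0, 0, b / c, e / c ^ 2, d / c ^ 2;
                 0, 0, 0, 1, -(b / c), -(b ^ q / c);
                 0, 0, 0, 0, 1, 0])
    (hJ : J = !![c, 0, 0, 0, 0, 0;
                 0, c, 0, 0, 0, 0;
                 0, 0, c, 0, 0, 0;
                 0, 0, 0, c, 0, 0;
                 0, 0, 0, 0, d / c, e / c;
                 0, 0, 0, 0, e ^ q / c, d / c]) :
    x.transpose * J * x.map (fun t => t ^ q) = J ∧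
      y.transpose * J * y.map (fun t => t ^ q) = J := by
  obtain ⟨σ, hσ⟩ := exists_ringHom_eq_pow_of_dvd_card (hF ▸ dvd_pow_self q two_ne_zero)
  have hσσa : σ (σ a) = a := by rw [hσ, hσ, ← pow_mul, ← sq, ← hF, FiniteField.pow_card]
  simp only [pow_add, pow_mul', pow_one, ← hσ] at hb hc hd he hy hJ ⊢
  exact stmt_14_general σ a b c d e hσσa hb hc hc0 hd he x y J hx hy hJ
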